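/- Let ρ₀ ≥ 1 and assume u ∈ H²(Ω). There exists a constant C > 0 depending only on Ω, a, b and c (independent of ρ₀) such that for every N and every mesh X ∈ S_N, the finite element error e_h = u − u_h satisfies ‖e_h‖_{L^∞(Ω)} ≤ C ‖r‖_Ω / N and ‖e_h'‖_{L^∞(Ω)} ≤ √(ρ₀ + 1) · C ‖r‖_Ω / √N, where r = f + a' u' − b u' − c u. -/

import Mathlib

/-!
Setting of Huang–He, "Error analysis for equidistributing meshes":
the boundary value problem  −(a u')' + b u' + c u = f on Ω = (0,1), u(0)=u(1)=0,
its linear finite element discretization on a mesh 0 = x₀ < ⋯ < x_N = 1,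
and the residual-based equidistribution quantities.
-/

noncomputable section
open MeasureTheory Real

namespace EquidMesh

/-- L² norm on (0,1). -/
def L2 (g : ℝ → ℝ) : ℝ := Real.sqrt (∫ t in (0:ℝ)..1, (g t)^2)

/-- L¹ norm on (0,1). -/
def L1 (g : ℝ → ℝ) : ℝ := ∫ t in (0:ℝ)..1, |g t|

/-- The L^{2/3} quasi-norm on (0,1): (∫₀¹ |g|^{2/3})^{3/2}. -/
def Lp23 (g : ℝ → ℝ) : ℝ := (∫ t in (0:ℝ)..1, |g t| ^ ((2:ℝ)/3)) ^ ((3:ℝ)/2)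

/-- L^∞ norm (essential supremum of |g|) on (0,1). -/
def Linf (g : ℝ → ℝ) : ℝ := essSup (fun t => |g t|) (volume.restrict (Set.Ioo (0:ℝ) 1))

/-- Membership in L²(0,1). -/
def MemL2 (g : ℝ → ℝ) : Prop :=
  Measurable g ∧ IntervalIntegrable (fun t => (g t)^2) volume 0 1

/-- Membership in L^∞(0,1). -/
def MemLinf (g : ℝ → ℝ) : Prop :=
  Measurable g ∧ ∃ M : ℝ, ∀ᵐ x ∂(volume.restrict (Set.Ioo (0:ℝ) 1)), |g x| ≤ M

/-- `g` is absolutely continuous on [0,1] with derivative `g' ∈ L¹(0,1)`. -/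
def HasL1Deriv (g g' : ℝ → ℝ) : Prop :=
  Measurable g' ∧ IntervalIntegrable g' volume 0 1 ∧
    ∀ x ∈ Set.Icc (0:ℝ) 1, g x = g 0 + ∫ t in (0:ℝ)..x, g' t

/-- A function in H¹(0,1): absolutely continuous on [0,1], carried together with its
(a.e.) derivative, which lies in L²(0,1). -/
structure H1 where
  val : ℝ → ℝ
  dval : ℝ → ℝ
  dval_meas : Measurable dval
  dval_int : IntervalIntegrable dval volume 0 1
  dval_sq_int : IntervalIntegrable (fun t => (dval t)^2) volume 0 1
  ftc : ∀ x ∈ Set.Icc (0:ℝ) 1, val x = val 0 + ∫ t in (0:ℝ)..x, dval t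

/-- `u ∈ H²(0,1)`: the derivative `u'` is absolutely continuous with `u'' ∈ L²(0,1)`. -/
def H1.IsH2 (u : H1) : Prop :=
  ∃ u'' : ℝ → ℝ, Measurable u'' ∧ IntervalIntegrable u'' volume 0 1 ∧
    IntervalIntegrable (fun t => (u'' t)^2) volume 0 1 ∧
    ∀ x ∈ Set.Icc (0:ℝ) 1, u.dval x = u.dval 0 + ∫ t in (0:ℝ)..x, u'' t

/-- The coefficients of the elliptic problem on Ω = (0,1):
`a, b ∈ W^{1,∞}(Ω)`, `c ∈ L^∞(Ω)`, `a ≥ a₀ > 0`, and `c − b'/2 ≥ 0` a.e. -/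
structure Coeffs where
  a : ℝ → ℝ
  b : ℝ → ℝ
  c : ℝ → ℝ
  a' : ℝ → ℝ
  b' : ℝ → ℝ
  a0 : ℝ
  a0_pos : 0 < a0
  a_lb : ∀ x ∈ Set.Icc (0:ℝ) 1, a0 ≤ a x
  a'_meas : Measurable a'
  b'_meas : Measurable b'
  c_meas : Measurable c
  a'_int : IntervalIntegrable a' volume 0 1
  b'_int : IntervalIntegrable b' volume 0 1
  a'_bdd : ∃ M : ℝ, ∀ᵐ x ∂(volume.restrict (Set.Ioo (0:ℝ) 1)), |a' x| ≤ M
  b'_bdd : ∃ M : ℝ, ∀ᵐ x ∂(volume.restrict (Set.Ioo (0:ℝ) 1)), |b' x| ≤ M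
  c_bdd : ∃ M : ℝ, ∀ᵐ x ∂(volume.restrict (Set.Ioo (0:ℝ) 1)), |c x| ≤ M
  ftc_a : ∀ x ∈ Set.Icc (0:ℝ) 1, a x = a 0 + ∫ t in (0:ℝ)..x, a' t
  ftc_b : ∀ x ∈ Set.Icc (0:ℝ) 1, b x = b 0 + ∫ t in (0:ℝ)..x, b' t
  cb_nonneg : ∀ᵐ x ∂(volume.restrict (Set.Ioo (0:ℝ) 1)), 0 ≤ c x - b' x / 2

/-- The bilinear form B(u,v) = ∫₀¹ (a u' v' + b u' v + c u v) dx. -/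
def Coeffs.B (P : Coeffs) (u v : H1) : ℝ :=
  ∫ t in (0:ℝ)..1,
    (P.a t * u.dval t * v.dval t + P.b t * u.dval t * v.val t + P.c t * u.val t * v.val t)

/-- The right-hand side functional (f, v) = ∫₀¹ f v dx. -/
def ip (f : ℝ → ℝ) (v : H1) : ℝ := ∫ t in (0:ℝ)..1, f t * v.val t

/-- `u ∈ H¹₀(Ω)` is the weak solution: B(u,v) = (f,v) for all v ∈ H¹₀(Ω). -/
def Coeffs.IsWeakSolution (P : Coeffs) (f : ℝ → ℝ) (u : H1) : Prop :=
  u.val 0 = 0 ∧ u.val 1 = 0 ∧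
    ∀ v : H1, v.val 0 = 0 → v.val 1 = 0 → P.B u v = ip f v

/-- A mesh of N elements of Ω = (0,1): 0 = x₀ < x₁ < ⋯ < x_N = 1. -/
structure Mesh (N : ℕ) where
  x : ℕ → ℝ
  x_zero : x 0 = 0
  x_last : x N = 1
  x_mono : ∀ i < N, x i < x (i+1)

/-- Element length (the element of index `i` is `(x i, x (i+1))`, `0 ≤ i < N`). -/
def Mesh.h {N : ℕ} (m : Mesh N) (i : ℕ) : ℝ := m.x (i+1) - m.x i

/-- `v` is piecewise linear with respect to the mesh: its derivative is constant
inside each element. -/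
def Mesh.IsPL {N : ℕ} (m : Mesh N) (v : H1) : Prop :=
  ∀ i < N, ∃ s : ℝ, ∀ t ∈ Set.Ioo (m.x i) (m.x (i+1)), v.dval t = s

/-- `uh` is the linear finite element solution on the mesh `m`:
a continuous piecewise linear function vanishing at 0 and 1 with
B(u_h, v_h) = (f, v_h) for all piecewise linear v_h vanishing at 0 and 1. -/
def Coeffs.IsFESolution (P : Coeffs) (f : ℝ → ℝ) {N : ℕ} (m : Mesh N) (uh : H1) : Prop :=
  uh.val 0 = 0 ∧ uh.val 1 = 0 ∧ m.IsPL uh ∧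
    ∀ v : H1, v.val 0 = 0 → v.val 1 = 0 → m.IsPL v → P.B uh v = ip f v

/-- The residual of `w`: r = f + a' w' − b w' − c w. -/
def Coeffs.res (P : Coeffs) (f : ℝ → ℝ) (w : H1) : ℝ → ℝ :=
  fun t => f t + P.a' t * w.dval t - P.b t * w.dval t - P.c t * w.val t

/-- The element L² average ⟨g⟩_i = (h_i⁻¹ ∫_{K_i} g²)^{1/2}. -/
def Mesh.avg {N : ℕ} (m : Mesh N) (g : ℝ → ℝ) (i : ℕ) : ℝ :=
  Real.sqrt ((1 / m.h i) * ∫ t in (m.x i)..(m.x (i+1)), (g t)^2)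

/-- The intensity parameter α_h = (Σ_i h_i ⟨g⟩_i^{2/3})³. -/
def Mesh.alpha {N : ℕ} (m : Mesh N) (g : ℝ → ℝ) : ℝ :=
  (∑ i ∈ Finset.range N, m.h i * (m.avg g i) ^ ((2:ℝ)/3)) ^ 3

/-- The adaptation function value ρ_i = (1 + α_h⁻¹ ⟨g⟩_i²)^{1/3}. -/
def Mesh.rho {N : ℕ} (m : Mesh N) (g : ℝ → ℝ) (i : ℕ) : ℝ :=
  (1 + (m.alpha g)⁻¹ * (m.avg g i)^2) ^ ((1:ℝ)/3)

/-- σ_h = Σ_i ρ_i h_i. -/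
def Mesh.sigma {N : ℕ} (m : Mesh N) (g : ℝ → ℝ) : ℝ :=
  ∑ i ∈ Finset.range N, m.rho g i * m.h i

/-- The mesh equidistributes (the piecewise constant adaptation function built from) `g`:
ρ_i h_i = σ_h / N for all elements. -/
def Mesh.IsEquidistributing {N : ℕ} (m : Mesh N) (g : ℝ → ℝ) : Prop :=
  ∀ i < N, m.rho g i * m.h i = m.sigma g / (N:ℝ)

/-- Membership in the mesh set S_N: 1/(ρ₀ N) ≤ h_i ≤ 2/N for all i. -/
def Mesh.InS {N : ℕ} (m : Mesh N) (ρ0 : ℝ) : Prop :=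
  ∀ i < N, 1 / (ρ0 * (N:ℝ)) ≤ m.h i ∧ m.h i ≤ 2 / (N:ℝ)

/-- The maximum norm distance ‖X − X̃‖_∞ between two meshes with the same N. -/
def meshDist {N : ℕ} (m m' : Mesh N) : ℝ :=
  (Finset.range (N+1)).sup' (Finset.nonempty_range_iff.mpr (Nat.succ_ne_zero N))
    (fun i => |m.x i - m'.x i|)

/-- The energy norm squared ‖v‖_E² = ∫₀¹ (a v'² + (c − b'/2) v²) dx. -/
def Coeffs.energySq (P : Coeffs) (v : H1) : ℝ :=
  ∫ t in (0:ℝ)..1, (P.a t * (v.dval t)^2 + (P.c t - P.b' t / 2) * (v.val t)^2)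

/-- `g` is a primitive on `[0,1]` of the integrable function `g'`. -/
def IsPrim (g g' : ℝ → ℝ) : Prop :=
  IntervalIntegrable g' volume 0 1 ∧
    ∀ x ∈ Set.Icc (0:ℝ) 1, g x = g 0 + ∫ t in (0:ℝ)..x, g' t

lemma intervalIntegrable_sub {g : ℝ → ℝ} (hg : IntervalIntegrable g volume 0 1) {p q : ℝ}
    (hp : p ∈ Set.Icc (0:ℝ) 1) (hq : q ∈ Set.Icc (0:ℝ) 1) : IntervalIntegrable g volume p q := by
  refine hg.mono_set ?_
  rw [Set.uIcc_of_le (zero_le_one' ℝ)]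
  exact Set.uIcc_subset_Icc hp hq

lemma IsPrim.sub_eq {g g' : ℝ → ℝ} (h : IsPrim g g') {p q : ℝ}
    (hp : p ∈ Set.Icc (0:ℝ) 1) (hq : q ∈ Set.Icc (0:ℝ) 1) :
    g q - g p = ∫ t in p..q, g' t := by
  have h0 : (0:ℝ) ∈ Set.Icc (0:ℝ) 1 := by simp
  rw [h.2 q hq, h.2 p hp, add_sub_add_left_eq_sub, intervalIntegral.integral_interval_sub_left
    (intervalIntegrable_sub h.1 h0 hq) (intervalIntegrable_sub h.1 h0 hp)]

lemma IsPrim.continuousOn {g g' : ℝ → ℝ} (h : IsPrim g g') :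
    ContinuousOn g (Set.Icc 0 1) := by
  have h1 := intervalIntegral.continuousOn_primitive_interval'
    (a := (0:ℝ)) h.1 Set.left_mem_uIcc
  rw [Set.uIcc_of_le (zero_le_one' ℝ)] at h1
  exact (continuousOn_const.add h1).congr fun x hx => h.2 x hx

lemma IsPrim.absolutelyContinuous {g g' : ℝ → ℝ} (h : IsPrim g g') :
    AbsolutelyContinuousOnInterval (fun x => g 0 + ∫ t in (0:ℝ)..x, g' t) 0 1 := by
  have h1 : AbsolutelyContinuousOnInterval (fun _ : ℝ => g 0) 0 1 :=
    (LipschitzWith.const (g 0)).lipschitzOnWith.absolutelyContinuousOnInterval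
  exact h1.add (h.1.absolutelyContinuousOnInterval_intervalIntegral Set.left_mem_uIcc)

lemma IsPrim.intervalIntegrable {g g' : ℝ → ℝ} (h : IsPrim g g') :
    IntervalIntegrable g volume 0 1 :=
  ContinuousOn.intervalIntegrable (by rw [Set.uIcc_of_le (zero_le_one' ℝ)]; exact h.continuousOn)

lemma IsPrim.ae_hasDerivAt {g g' : ℝ → ℝ} (h : IsPrim g g') :
    ∀ᵐ x : ℝ, x ∈ Set.uIcc (0:ℝ) 1 →
      HasDerivAt (fun x => g 0 + ∫ t in (0:ℝ)..x, g' t) (g' x) x := by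
  filter_upwards [h.1.ae_hasDerivAt_integral] with x hx hx1
  exact (hx hx1 0 Set.left_mem_uIcc).const_add _

/-- The product rule for absolutely continuous functions. -/
lemma IsPrim.mul {g g' k k' : ℝ → ℝ} (hg : IsPrim g g') (hk : IsPrim k k') :
    IsPrim (fun x => g x * k x) (fun x => g' x * k x + g x * k' x) := by
  have hu : Set.uIcc (0:ℝ) 1 = Set.Icc 0 1 := Set.uIcc_of_le zero_le_one
  refine ⟨(hg.1.mul_continuousOn (hu ▸ hk.continuousOn)).add
    (hk.1.continuousOn_mul (hu ▸ hg.continuousOn)), fun x hx => ?_⟩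
  have hsub : Set.uIcc 0 x ⊆ Set.uIcc (0:ℝ) 1 := by
    rw [hu]; exact Set.uIcc_subset_Icc (by simp) hx
  have key := (hg.absolutelyContinuous.mono hsub).integral_deriv_mul_eq_sub
    (hk.absolutelyContinuous.mono hsub)
  simp only [← hg.2 x hx, ← hk.2 x hx, intervalIntegral.integral_same, add_zero] at key
  rw [eq_comm, ← eq_sub_iff_add_eq', ← key]
  refine intervalIntegral.integral_congr_ae ?_
  filter_upwards [hg.ae_hasDerivAt, hk.ae_hasDerivAt] with y hy1 hy2 hy
  have hy' := hsub (Set.uIoc_subset_uIcc hy)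
  rw [(hy1 hy').deriv, (hy2 hy').deriv, ← hg.2 y (hu ▸ hy'), ← hk.2 y (hu ▸ hy')]

lemma memLp_Ioc_iff {g : ℝ → ℝ} {p q : ℝ} (hpq : p ≤ q)
    (hm : AEStronglyMeasurable g (volume.restrict (Set.Ioc p q))) :
    MemLp g 2 (volume.restrict (Set.Ioc p q)) ↔
      IntervalIntegrable (fun t => g t ^ 2) volume p q := by
  rw [memLp_two_iff_integrable_sq hm, intervalIntegrable_iff_integrableOn_Ioc_of_le hpq,
    IntegrableOn]

lemma IsPrim.memLp {g g' : ℝ → ℝ} (h : IsPrim g g') :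
    MemLp g 2 (volume.restrict (Set.Ioc 0 1)) := by
  have hc := h.continuousOn
  refine (memLp_Ioc_iff zero_le_one ?_).2 ?_
  · exact (hc.aestronglyMeasurable measurableSet_Icc).mono_set Set.Ioc_subset_Icc_self
  · refine ContinuousOn.intervalIntegrable ?_
    rw [Set.uIcc_of_le (zero_le_one' ℝ)]
    exact hc.pow 2

/-- The Cauchy–Schwarz inequality on an interval. -/
lemma integral_abs_mul_abs_le {f g : ℝ → ℝ} {p q : ℝ} (hpq : p ≤ q)
    (hf : MemLp f 2 (volume.restrict (Set.Ioc p q)))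
    (hg : MemLp g 2 (volume.restrict (Set.Ioc p q))) :
    ∫ t in p..q, |f t| * |g t| ≤
      Real.sqrt (∫ t in p..q, f t ^ 2) * Real.sqrt (∫ t in p..q, g t ^ 2) := by
  simp only [intervalIntegral.integral_of_le hpq]
  have h := integral_mul_le_Lp_mul_Lq_of_nonneg (p := 2) (q := 2)
    (μ := volume.restrict (Set.Ioc p q)) (f := fun t => |f t|) (g := fun t => |g t|)
    Real.HolderConjugate.two_two (ae_of_all _ fun _ => abs_nonneg _)
    (ae_of_all _ fun _ => abs_nonneg _) (by simpa using hf.norm) (by simpa using hg.norm)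
  simpa [Real.sqrt_eq_rpow] using h

lemma integral_abs_le_sqrt {f : ℝ → ℝ} {p q : ℝ} (hpq : p ≤ q)
    (hf : MemLp f 2 (volume.restrict (Set.Ioc p q))) :
    ∫ t in p..q, |f t| ≤ Real.sqrt (q - p) * Real.sqrt (∫ t in p..q, f t ^ 2) := by
  have h := integral_abs_mul_abs_le hpq hf (memLp_const (1:ℝ))
  simpa [mul_comm] using h

lemma _root_.MeasureTheory.MemLp.mono_Ioc {f : ℝ → ℝ} (hf : MemLp f 2 (volume.restrict (Set.Ioc 0 1))) {p q : ℝ}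
    (hp : 0 ≤ p) (hq : q ≤ 1) : MemLp f 2 (volume.restrict (Set.Ioc p q)) :=
  hf.mono_measure (Measure.restrict_mono (Set.Ioc_subset_Ioc hp hq) le_rfl)

/-- The oscillation of a primitive of an `L²` function. -/
lemma IsPrim.abs_sub_le {g g' : ℝ → ℝ} (h : IsPrim g g')
    (h2 : MemLp g' 2 (volume.restrict (Set.Ioc 0 1))) {p q s t : ℝ} (hp : 0 ≤ p) (hq : q ≤ 1)
    (hs : s ∈ Set.Icc p q) (ht : t ∈ Set.Icc p q) :
    |g t - g s| ≤ Real.sqrt (q - p) * Real.sqrt (∫ τ in p..q, g' τ ^ 2) := by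
  wlog hst : s ≤ t generalizing s t
  · rw [abs_sub_comm]; exact this ht hs (le_of_not_ge hst)
  have hpq : p ≤ q := hs.1.trans hs.2
  rw [h.sub_eq ⟨hp.trans hs.1, hs.2.trans hq⟩ ⟨hp.trans ht.1, ht.2.trans hq⟩]
  have hint : IntervalIntegrable (fun τ => |g' τ|) volume p q :=
    (intervalIntegrable_sub h.1 ⟨hp, hpq.trans hq⟩ ⟨hp.trans hpq, hq⟩).abs
  calc |∫ τ in s..t, g' τ| ≤ ∫ τ in s..t, |g' τ| :=
        intervalIntegral.abs_integral_le_integral_abs hst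
    _ ≤ ∫ τ in p..q, |g' τ| :=
        intervalIntegral.integral_mono_interval hs.1 hst ht.2
          (ae_of_all _ fun _ => abs_nonneg _) hint
    _ ≤ _ := integral_abs_le_sqrt hpq (MemLp.mono_Ioc h2 hp hq)

lemma ae_restrict_Ioc_of_Ioo {p : ℝ → Prop}
    (h : ∀ᵐ x ∂(volume.restrict (Set.Ioo (0:ℝ) 1)), p x) :
    ∀ᵐ x ∂(volume.restrict (Set.Ioc (0:ℝ) 1)), p x := by
  rwa [← restrict_Ioo_eq_restrict_Ioc]

lemma IsPrim.memLp_top {g g' : ℝ → ℝ} (h : IsPrim g g') :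
    MemLp g ⊤ (volume.restrict (Set.Ioc 0 1)) := by
  obtain ⟨M, hM⟩ := isCompact_Icc.exists_bound_of_continuousOn h.continuousOn
  refine memLp_top_of_bound h.memLp.1 M ?_
  filter_upwards [ae_restrict_mem measurableSet_Ioc] with x hx
  exact hM x (Set.Ioc_subset_Icc_self hx)

lemma memLp_top_of_Ioo {g : ℝ → ℝ} (hg : Measurable g)
    (h : ∃ M : ℝ, ∀ᵐ x ∂(volume.restrict (Set.Ioo (0:ℝ) 1)), |g x| ≤ M) :
    MemLp g ⊤ (volume.restrict (Set.Ioc 0 1)) := by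
  obtain ⟨M, hM⟩ := h
  exact memLp_top_of_bound hg.aestronglyMeasurable M (ae_restrict_Ioc_of_Ioo hM)

lemma _root_.MeasureTheory.MemLp.top_mul_two {f g : ℝ → ℝ} (hf : MemLp f ⊤ (volume.restrict (Set.Ioc 0 1)))
    (hg : MemLp g 2 (volume.restrict (Set.Ioc 0 1))) :
    MemLp (fun x => f x * g x) 2 (volume.restrict (Set.Ioc 0 1)) :=
  MemLp.mul hg hf

lemma _root_.MeasureTheory.MemLp.exists_bound_of_top {f : ℝ → ℝ} (hf : MemLp f ⊤ (volume.restrict (Set.Ioc 0 1))) :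
    ∃ M : ℝ, 0 ≤ M ∧ ∀ᵐ x ∂(volume.restrict (Set.Ioc (0:ℝ) 1)), |f x| ≤ M :=
  ⟨_, lpNorm_nonneg, ae_le_lpNorm_exponent_top hf⟩

lemma _root_.MeasureTheory.MemLp.intervalIntegrable_mul {f g : ℝ → ℝ} (hf : MemLp f 2 (volume.restrict (Set.Ioc 0 1)))
    (hg : MemLp g 2 (volume.restrict (Set.Ioc 0 1))) :
    IntervalIntegrable (fun x => f x * g x) volume 0 1 :=
  (intervalIntegrable_iff_integrableOn_Ioc_of_le zero_le_one).2 (hf.integrable_mul hg)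

lemma _root_.MeasureTheory.MemLp.intervalIntegrable {f : ℝ → ℝ} (hf : MemLp f 2 (volume.restrict (Set.Ioc 0 1))) :
    IntervalIntegrable f volume 0 1 :=
  (intervalIntegrable_iff_integrableOn_Ioc_of_le zero_le_one).2 (hf.integrable one_le_two)

lemma sq_L2 (g : ℝ → ℝ) : L2 g ^ 2 = ∫ t in (0:ℝ)..1, g t ^ 2 :=
  Real.sq_sqrt (intervalIntegral.integral_nonneg zero_le_one fun _ _ => sq_nonneg _)

lemma L2_nonneg (g : ℝ → ℝ) : 0 ≤ L2 g := Real.sqrt_nonneg _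

lemma H1.isPrim (v : H1) : IsPrim v.val v.dval := ⟨v.dval_int, v.ftc⟩

lemma H1.memLp_dval (v : H1) : MemLp v.dval 2 (volume.restrict (Set.Ioc 0 1)) :=
  (memLp_Ioc_iff zero_le_one v.dval_meas.aestronglyMeasurable).2 v.dval_sq_int

lemma H1.abs_val_le (v : H1) (h0 : v.val 0 = 0) {x : ℝ} (hx : x ∈ Set.Icc (0:ℝ) 1) :
    |v.val x| ≤ L2 v.dval := by
  have h := v.isPrim.abs_sub_le v.memLp_dval le_rfl le_rfl (Set.left_mem_Icc.2 zero_le_one) hx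
  simpa [h0, L2] using h

/-- The difference of two `H¹` functions. -/
def H1.sub (u v : H1) : H1 where
  val t := u.val t - v.val t
  dval t := u.dval t - v.dval t
  dval_meas := u.dval_meas.sub v.dval_meas
  dval_int := u.dval_int.sub v.dval_int
  dval_sq_int :=
    (memLp_Ioc_iff zero_le_one (u.dval_meas.sub v.dval_meas).aestronglyMeasurable).1
      (u.memLp_dval.sub v.memLp_dval)
  ftc x hx := by
    have h0 : (0:ℝ) ∈ Set.Icc (0:ℝ) 1 := by simp
    rw [intervalIntegral.integral_sub (intervalIntegrable_sub u.dval_int h0 hx)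
      (intervalIntegrable_sub v.dval_int h0 hx), u.ftc x hx, v.ftc x hx]
    ring

namespace Coeffs

variable (P : Coeffs)

lemma isPrim_a : IsPrim P.a P.a' := ⟨P.a'_int, P.ftc_a⟩

lemma isPrim_b : IsPrim P.b P.b' := ⟨P.b'_int, P.ftc_b⟩

lemma B_intervalIntegrable (u v : H1) : IntervalIntegrable (fun t =>
    P.a t * u.dval t * v.dval t + P.b t * u.dval t * v.val t + P.c t * u.val t * v.val t)
    volume 0 1 :=
  (((P.isPrim_a.memLp_top.top_mul_two u.memLp_dval).intervalIntegrable_mul v.memLp_dval).add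
    ((P.isPrim_b.memLp_top.top_mul_two u.memLp_dval).intervalIntegrable_mul v.isPrim.memLp)).add
    (((memLp_top_of_Ioo P.c_meas P.c_bdd).top_mul_two u.isPrim.memLp).intervalIntegrable_mul
      v.isPrim.memLp)

lemma B_sub_left (u v w : H1) : P.B (u.sub v) w = P.B u w - P.B v w := by
  unfold B
  rw [← intervalIntegral.integral_sub (P.B_intervalIntegrable u w) (P.B_intervalIntegrable v w)]
  refine intervalIntegral.integral_congr fun t _ => ?_
  simp only [H1.sub]
  ring

lemma B_sub_right (u v w : H1) : P.B u (v.sub w) = P.B u v - P.B u w := by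
  unfold B
  rw [← intervalIntegral.integral_sub (P.B_intervalIntegrable u v) (P.B_intervalIntegrable u w)]
  refine intervalIntegral.integral_congr fun t _ => ?_
  simp only [H1.sub]
  ring

/-- Coercivity of the bilinear form on `H¹₀`. -/
lemma coercive (e : H1) (h0 : e.val 0 = 0) (h1 : e.val 1 = 0) :
    P.a0 * L2 e.dval ^ 2 ≤ P.B e e := by
  have hprim := P.isPrim_b.mul (e.isPrim.mul e.isPrim)
  have hz := hprim.sub_eq (Set.left_mem_Icc.2 zero_le_one) (Set.right_mem_Icc.2 zero_le_one)
  simp only [h0, h1, mul_zero, sub_zero] at hz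
  have hB : P.B e e = ∫ t in (0:ℝ)..1, ((P.a t * e.dval t * e.dval t + P.b t * e.dval t * e.val t
      + P.c t * e.val t * e.val t) - 1 / 2 * (P.b' t * (e.val t * e.val t)
      + P.b t * (e.dval t * e.val t + e.val t * e.dval t))) := by
    rw [intervalIntegral.integral_sub (P.B_intervalIntegrable e e) (hprim.1.const_mul _),
      intervalIntegral.integral_const_mul, ← hz, mul_zero, sub_zero, B]
  rw [hB, sq_L2, ← intervalIntegral.integral_const_mul]
  refine intervalIntegral.integral_mono_ae_restrict zero_le_one (e.dval_sq_int.const_mul _)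
    ((P.B_intervalIntegrable e e).sub (hprim.1.const_mul _)) ?_
  rw [← restrict_Ioc_eq_restrict_Icc]
  filter_upwards [ae_restrict_mem measurableSet_Ioc, ae_restrict_Ioc_of_Ioo P.cb_nonneg]
    with t ht hcb
  have ha := mul_le_mul_of_nonneg_right (P.a_lb t (Set.Ioc_subset_Icc_self ht))
    (sq_nonneg (e.dval t))
  have hc := mul_nonneg hcb (sq_nonneg (e.val t))
  nlinarith

/-- Boundedness of the bilinear form on `H¹₀`. -/
lemma exists_bounded : ∃ K : ℝ, 0 ≤ K ∧ ∀ e w : H1, e.val 0 = 0 → w.val 0 = 0 →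
    P.B e w ≤ K * L2 e.dval * L2 w.dval := by
  obtain ⟨A, hA0, hA⟩ := P.isPrim_a.memLp_top.exists_bound_of_top
  obtain ⟨M, hM0, hM⟩ := P.isPrim_b.memLp_top.exists_bound_of_top
  obtain ⟨K, hK0, hK⟩ := (memLp_top_of_Ioo P.c_meas P.c_bdd).exists_bound_of_top
  refine ⟨A + M + K, by positivity, fun e w he hw => ?_⟩
  have hi1 : IntervalIntegrable (fun t => A * (|e.dval t| * |w.dval t|)) volume 0 1 :=
    (MemLp.intervalIntegrable_mul e.memLp_dval.norm w.memLp_dval.norm).const_mul _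
  have hi2 : IntervalIntegrable (fun t => M * L2 w.dval * |e.dval t|) volume 0 1 :=
    e.dval_int.abs.const_mul _
  have hi3 : IntervalIntegrable (fun _ => K * L2 e.dval * L2 w.dval) volume (0:ℝ) 1 :=
    intervalIntegrable_const
  have hle : P.B e w ≤ ∫ t in (0:ℝ)..1, (A * (|e.dval t| * |w.dval t|)
      + M * L2 w.dval * |e.dval t| + K * L2 e.dval * L2 w.dval) := by
    refine intervalIntegral.integral_mono_ae_restrict zero_le_one (P.B_intervalIntegrable e w)
      ((hi1.add hi2).add hi3) ?_
    rw [← restrict_Ioc_eq_restrict_Icc]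
    filter_upwards [ae_restrict_mem measurableSet_Ioc, hA, hM, hK] with t ht h1 h2 h3
    have he' := e.abs_val_le he (Set.Ioc_subset_Icc_self ht)
    have hw' := w.abs_val_le hw (Set.Ioc_subset_Icc_self ht)
    have b1 : P.a t * e.dval t * w.dval t ≤ A * (|e.dval t| * |w.dval t|) := by
      refine (le_abs_self _).trans ?_
      rw [abs_mul, abs_mul, mul_assoc]
      gcongr
    have b2 : P.b t * e.dval t * w.val t ≤ M * L2 w.dval * |e.dval t| := by
      refine (le_abs_self _).trans ?_
      rw [abs_mul, abs_mul, mul_right_comm]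
      gcongr
    have b3 : P.c t * e.val t * w.val t ≤ K * L2 e.dval * L2 w.dval := by
      refine (le_abs_self _).trans ?_
      rw [abs_mul, abs_mul]
      have := L2_nonneg e.dval
      gcongr
    exact add_le_add (add_le_add b1 b2) b3
  rw [intervalIntegral.integral_add (hi1.add hi2) hi3, intervalIntegral.integral_add hi1 hi2,
    intervalIntegral.integral_const_mul, intervalIntegral.integral_const_mul] at hle
  have c1 : ∫ t in (0:ℝ)..1, |e.dval t| * |w.dval t| ≤ L2 e.dval * L2 w.dval :=
    integral_abs_mul_abs_le zero_le_one e.memLp_dval w.memLp_dval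
  have c2 : ∫ t in (0:ℝ)..1, |e.dval t| ≤ L2 e.dval := by
    simpa [L2] using integral_abs_le_sqrt zero_le_one e.memLp_dval
  simp only [intervalIntegral.integral_const, sub_zero, one_smul] at hle
  have d1 := mul_le_mul_of_nonneg_left c1 hA0
  have d2 := mul_le_mul_of_nonneg_left c2 (mul_nonneg hM0 (L2_nonneg w.dval))
  linarith

end Coeffs

lemma Coeffs.memLp_res (P : Coeffs) {f : ℝ → ℝ} (hf : MemL2 f) {u : H1} :
    MemLp (P.res f u) 2 (volume.restrict (Set.Ioc 0 1)) := by
  have hf' := (memLp_Ioc_iff zero_le_one hf.1.aestronglyMeasurable).2 hf.2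
  exact ((hf'.add ((memLp_top_of_Ioo P.a'_meas P.a'_bdd).top_mul_two u.memLp_dval)).sub
    (P.isPrim_b.memLp_top.top_mul_two u.memLp_dval)).sub
    ((memLp_top_of_Ioo P.c_meas P.c_bdd).top_mul_two u.isPrim.memLp)

/-- A smooth function, as an element of `H¹`. -/
def H1.ofContDiff (v : ℝ → ℝ) (hv : ContDiff ℝ 1 v) : H1 where
  val := v
  dval := deriv v
  dval_meas := measurable_deriv v
  dval_int := (hv.continuous_deriv le_rfl).intervalIntegrable _ _
  dval_sq_int := ((hv.continuous_deriv le_rfl).pow 2).intervalIntegrable _ _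
  ftc x _ := by
    rw [intervalIntegral.integral_deriv_eq_sub
      (fun t _ => (hv.differentiable one_ne_zero).differentiableAt)
      ((hv.continuous_deriv le_rfl).intervalIntegrable _ _)]
    ring

/-- An `H²` weak solution satisfies the differential equation `-a u'' = r` almost everywhere. -/
lemma Coeffs.IsWeakSolution.ae_strong {P : Coeffs} {f : ℝ → ℝ} {u : H1}
    (hu : P.IsWeakSolution f u) (hf : MemL2 f) {u'' : ℝ → ℝ} (hprim : IsPrim u.dval u'')
    (h2 : MemLp u'' 2 (volume.restrict (Set.Ioc 0 1))) :
    ∀ᵐ t ∂(volume.restrict (Set.Ioc (0:ℝ) 1)), P.a t * u'' t + P.res f u t = 0 := by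
  have hG : MemLp (fun t => P.a t * u'' t + P.res f u t) 2 (volume.restrict (Set.Ioc 0 1)) :=
    (P.isPrim_a.memLp_top.top_mul_two h2).add (P.memLp_res hf)
  rw [← restrict_Ioo_eq_restrict_Ioc, ae_restrict_iff' measurableSet_Ioo]
  refine isOpen_Ioo.ae_eq_zero_of_integral_contDiff_smul_eq_zero ?_ fun v hv _ hsupp => ?_
  · exact (IntegrableOn.mono_set (hG.integrable one_le_two)
      Set.Ioo_subset_Ioc_self).locallyIntegrableOn
  have hz : ∀ t, t ∉ Set.Ioo (0:ℝ) 1 → v t = 0 := fun t ht =>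
    image_eq_zero_of_notMem_tsupport fun h => ht (hsupp h)
  have hv1 : ContDiff ℝ 1 v := hv.of_le (by exact_mod_cast le_top)
  set V := H1.ofContDiff v hv1 with hV
  have hV0 : V.val 0 = 0 := hz 0 (by simp)
  have hV1 : V.val 1 = 0 := hz 1 (by simp)
  have hmul := (P.isPrim_a.mul hprim).mul V.isPrim
  have hs := hmul.sub_eq (Set.left_mem_Icc.2 zero_le_one) (Set.right_mem_Icc.2 zero_le_one)
  rw [hV0, hV1, mul_zero, mul_zero, sub_zero] at hs
  have hf' := (memLp_Ioc_iff zero_le_one hf.1.aestronglyMeasurable).2 hf.2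
  have hw := hu.2.2 V hV0 hV1
  have hfi : IntervalIntegrable (fun t => f t * V.val t) volume 0 1 :=
    hf'.intervalIntegrable_mul V.isPrim.memLp
  have hset : ∫ t, v t • (P.a t * u'' t + P.res f u t)
      = ∫ t in Set.Ioc (0:ℝ) 1, v t • (P.a t * u'' t + P.res f u t) := by
    refine (setIntegral_eq_integral_of_forall_compl_eq_zero fun t ht => ?_).symm
    rw [hz t fun h => ht (Set.Ioo_subset_Ioc_self h), zero_smul]
  rw [hset, ← intervalIntegral.integral_of_le zero_le_one]
  calc ∫ t in (0:ℝ)..1, v t • (P.a t * u'' t + P.res f u t)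
      = ∫ t in (0:ℝ)..1, (((P.a' t * u.dval t + P.a t * u'' t) * V.val t
          + P.a t * u.dval t * V.dval t) - ((P.a t * u.dval t * V.dval t
          + P.b t * u.dval t * V.val t + P.c t * u.val t * V.val t) - f t * V.val t)) := by
        refine intervalIntegral.integral_congr fun t _ => ?_
        change v t * (P.a t * u'' t + P.res f u t) = _
        have : V.val t = v t := rfl
        rw [this, Coeffs.res]
        ring
    _ = 0 := by
        rw [intervalIntegral.integral_sub hmul.1 ((P.B_intervalIntegrable u V).sub hfi),
          intervalIntegral.integral_sub (P.B_intervalIntegrable u V) hfi, ← hs]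
        have : P.B u V - ip f V = 0 := sub_eq_zero.2 hw
        rw [B, ip] at this
        rw [this, sub_zero]

/-- `H²` regularity estimate: the second derivative is controlled by the residual. -/
lemma Coeffs.IsWeakSolution.L2_le_res {P : Coeffs} {f : ℝ → ℝ} {u : H1}
    (hu : P.IsWeakSolution f u) (hf : MemL2 f) {u'' : ℝ → ℝ} (hprim : IsPrim u.dval u'')
    (h2 : MemLp u'' 2 (volume.restrict (Set.Ioc 0 1))) :
    P.a0 * L2 u'' ≤ L2 (P.res f u) := by
  refine (sq_le_sq₀ (mul_nonneg P.a0_pos.le (L2_nonneg _)) (L2_nonneg _)).1 ?_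
  rw [mul_pow, sq_L2, sq_L2, ← intervalIntegral.integral_const_mul]
  have hr := P.memLp_res hf (u := u)
  refine intervalIntegral.integral_mono_ae_restrict zero_le_one
    (((memLp_Ioc_iff zero_le_one h2.1).1 h2).const_mul _)
    ((memLp_Ioc_iff zero_le_one hr.1).1 hr) ?_
  rw [← restrict_Ioc_eq_restrict_Icc]
  filter_upwards [ae_restrict_mem measurableSet_Ioc, hu.ae_strong hf hprim h2] with t ht hst
  have ha := P.a_lb t (Set.Ioc_subset_Icc_self ht)
  have h1 : P.res f u t ^ 2 = P.a t ^ 2 * u'' t ^ 2 := by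
    rw [eq_neg_of_add_eq_zero_right hst]; ring
  rw [h1]
  have := P.a0_pos.le
  gcongr

namespace Mesh

variable {N : ℕ} (m : Mesh N)

lemma x_monotone {i j : ℕ} (hij : i ≤ j) (hj : j ≤ N) : m.x i ≤ m.x j := by
  induction j, hij using Nat.le_induction with
  | base => exact le_rfl
  | succ k _ ih => exact (ih (Nat.le_of_succ_le hj)).trans (m.x_mono k hj).le

lemma x_mem {i : ℕ} (hi : i ≤ N) : m.x i ∈ Set.Icc (0:ℝ) 1 :=
  ⟨m.x_zero ▸ m.x_monotone (Nat.zero_le i) hi, m.x_last ▸ m.x_monotone hi le_rfl⟩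

lemma exists_mem_Ico {t : ℝ} (ht : t ∈ Set.Ico (0:ℝ) 1) :
    ∃ i < N, t ∈ Set.Ico (m.x i) (m.x (i + 1)) := by
  by_contra! h
  have key : ∀ i ≤ N, m.x i ≤ t := by
    intro i
    induction i with
    | zero => intro _; rw [m.x_zero]; exact ht.1
    | succ k ih =>
      intro hk
      by_contra! hlt
      exact h k hk ⟨ih (Nat.le_of_succ_le hk), hlt⟩
  have := key N le_rfl
  rw [m.x_last] at this
  exact absurd ht.2 (not_lt.2 this)

lemma exists_mem_Ioo_ae :
    ∀ᵐ t ∂(volume.restrict (Set.Ioo (0:ℝ) 1)), ∃ i < N, t ∈ Set.Ioo (m.x i) (m.x (i + 1)) := by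
  have hfin : ∀ᵐ t ∂(volume : Measure ℝ), t ∉ m.x '' (Finset.range (N + 1) : Set ℕ) :=
    measure_eq_zero_iff_ae_notMem.1 (((Finset.finite_toSet _).image _).measure_zero _)
  filter_upwards [ae_restrict_mem measurableSet_Ioo, ae_restrict_of_ae hfin] with t ht htn
  obtain ⟨i, hi, hti⟩ := m.exists_mem_Ico (Set.Ioo_subset_Ico_self ht)
  refine ⟨i, hi, lt_of_le_of_ne hti.1 fun h => htn ⟨i, ?_, h⟩, hti.2⟩
  simp only [Finset.coe_range, Set.mem_Iio]
  omega

/-- The function equal to `s i` on the `i`-th element. -/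
def piecewiseConst (s : ℕ → ℝ) (t : ℝ) : ℝ :=
  ∑ i ∈ Finset.range N, (Set.Ico (m.x i) (m.x (i + 1))).indicator (fun _ => s i) t

lemma piecewiseConst_eq (s : ℕ → ℝ) {i : ℕ} (hi : i < N) {t : ℝ}
    (ht : t ∈ Set.Ico (m.x i) (m.x (i + 1))) : m.piecewiseConst s t = s i := by
  rw [piecewiseConst, Finset.sum_eq_single_of_mem i (Finset.mem_range.2 hi),
    Set.indicator_of_mem ht]
  intro j hj hji
  refine Set.indicator_of_notMem (fun hjt => ?_) _
  rcases lt_or_gt_of_ne hji with h | h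
  · exact absurd (hjt.2.trans_le ((m.x_monotone h hi.le).trans ht.1)) (lt_irrefl _)
  · exact absurd (ht.2.trans_le ((m.x_monotone h (Finset.mem_range.1 hj).le).trans hjt.1))
      (lt_irrefl _)

lemma measurable_piecewiseConst (s : ℕ → ℝ) : Measurable (m.piecewiseConst s) :=
  Finset.measurable_sum _ fun _ _ => measurable_const.indicator measurableSet_Ico

lemma memLp_piecewiseConst (s : ℕ → ℝ) :
    MemLp (m.piecewiseConst s) 2 (volume.restrict (Set.Ioc 0 1)) :=
  memLp_finsetSum _ fun _ _ => (memLp_const _).indicator measurableSet_Ico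

/-- The continuous piecewise linear function with slopes `s` vanishing at `0`. -/
def ofSlopes (s : ℕ → ℝ) : H1 where
  val x := ∫ t in (0:ℝ)..x, m.piecewiseConst s t
  dval := m.piecewiseConst s
  dval_meas := m.measurable_piecewiseConst s
  dval_int := (m.memLp_piecewiseConst s).intervalIntegrable
  dval_sq_int := (memLp_Ioc_iff zero_le_one (m.memLp_piecewiseConst s).1).1
    (m.memLp_piecewiseConst s)
  ftc x _ := by simp

lemma integral_eq_sum {g : ℝ → ℝ} (hg : IntervalIntegrable g volume 0 1) :
    ∫ t in (0:ℝ)..1, g t = ∑ i ∈ Finset.range N, ∫ t in m.x i..m.x (i + 1), g t := by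
  rw [intervalIntegral.sum_integral_adjacent_intervals fun i hi =>
    intervalIntegrable_sub hg (m.x_mem (le_of_lt hi)) (m.x_mem hi), m.x_zero, m.x_last]

/-- Integrals over an element only see the values inside the element. -/
lemma integral_congr_element {g k : ℝ → ℝ} {i : ℕ} (hi : i < N)
    (h : ∀ t ∈ Set.Ioo (m.x i) (m.x (i + 1)), g t = k t) :
    ∫ t in m.x i..m.x (i + 1), g t = ∫ t in m.x i..m.x (i + 1), k t := by
  rw [intervalIntegral.integral_of_le (m.x_mono i hi).le,
    intervalIntegral.integral_of_le (m.x_mono i hi).le, integral_Ioc_eq_integral_Ioo,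
    integral_Ioc_eq_integral_Ioo]
  exact setIntegral_congr_fun measurableSet_Ioo h

/-- The average of `g` over the `i`-th element. -/
def mean (g : ℝ → ℝ) (i : ℕ) : ℝ := (m.h i)⁻¹ * ∫ t in m.x i..m.x (i + 1), g t

lemma h_pos {i : ℕ} (hi : i < N) : 0 < m.h i := sub_pos.2 (m.x_mono i hi)

lemma ofSlopes_mean_one {u : H1} (h0 : u.val 0 = 0) (h1 : u.val 1 = 0) :
    (m.ofSlopes (m.mean u.dval)).val 1 = 0 := by
  have hu := u.ftc 1 (by simp)
  rw [h0, h1, zero_add] at hu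
  rw [hu]
  change ∫ t in (0:ℝ)..1, m.piecewiseConst (m.mean u.dval) t = _
  rw [m.integral_eq_sum (m.memLp_piecewiseConst _).intervalIntegrable,
    m.integral_eq_sum u.dval_int]
  refine Finset.sum_congr rfl fun i hi => ?_
  have hi := Finset.mem_range.1 hi
  rw [m.integral_congr_element hi (k := fun _ => m.mean u.dval i) fun t ht =>
    m.piecewiseConst_eq _ hi (Set.Ioo_subset_Ico_self ht), intervalIntegral.integral_const,
    smul_eq_mul, mean]
  exact mul_inv_cancel_left₀ (m.h_pos hi).ne' _

lemma abs_sub_mean_le {g g' : ℝ → ℝ} (h : IsPrim g g')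
    (h2 : MemLp g' 2 (volume.restrict (Set.Ioc 0 1))) {i : ℕ} (hi : i < N) {t : ℝ}
    (ht : t ∈ Set.Icc (m.x i) (m.x (i + 1))) :
    |g t - m.mean g i| ≤
      Real.sqrt (m.h i) * Real.sqrt (∫ τ in m.x i..m.x (i + 1), g' τ ^ 2) := by
  have hh := m.h_pos hi
  have hx0 := m.x_mem hi.le
  have hx1 := m.x_mem (Nat.succ_le_of_lt hi)
  have hle := (m.x_mono i hi).le
  have hg := intervalIntegrable_sub h.intervalIntegrable hx0 hx1
  have hb := intervalIntegral.norm_integral_le_of_norm_le_const (a := m.x i) (b := m.x (i + 1))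
    (f := fun s => g t - g s)
    (C := Real.sqrt (m.h i) * Real.sqrt (∫ τ in m.x i..m.x (i + 1), g' τ ^ 2)) fun s hs => by
      rw [Set.uIoc_of_le hle] at hs
      exact h.abs_sub_le h2 hx0.1 hx1.2 (Set.Ioc_subset_Icc_self hs) ht
  rw [intervalIntegral.integral_sub intervalIntegrable_const hg, intervalIntegral.integral_const,
    smul_eq_mul, abs_of_pos (show 0 < m.x (i + 1) - m.x i from hh), Real.norm_eq_abs] at hb
  change |m.h i * g t - _| ≤ _ * m.h i at hb
  have e : m.h i * g t - ∫ s in m.x i..m.x (i + 1), g s = m.h i * (g t - m.mean g i) := by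
    rw [mean, mul_sub, mul_inv_cancel_left₀ hh.ne']
  rw [e, abs_mul, abs_of_pos hh, mul_comm] at hb
  exact le_of_mul_le_mul_right hb hh

/-- The interpolation estimate for the derivative. -/
lemma L2_sub_ofSlopes_le {u : H1} {u'' : ℝ → ℝ} (h : IsPrim u.dval u'')
    (h2 : MemLp u'' 2 (volume.restrict (Set.Ioc 0 1))) {H : ℝ} (hH0 : 0 ≤ H)
    (hH : ∀ i < N, m.h i ≤ H) :
    L2 (u.sub (m.ofSlopes (m.mean u.dval))).dval ≤ H * L2 u'' := by
  refine (sq_le_sq₀ (L2_nonneg _) (mul_nonneg hH0 (L2_nonneg _))).1 ?_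
  have hsq := (memLp_Ioc_iff zero_le_one h2.1).1 h2
  rw [mul_pow, sq_L2, sq_L2, m.integral_eq_sum (H1.dval_sq_int _), m.integral_eq_sum hsq,
    Finset.mul_sum]
  refine Finset.sum_le_sum fun i hi => ?_
  have hi := Finset.mem_range.1 hi
  have hh := m.h_pos hi
  have hle := (m.x_mono i hi).le
  have hI : 0 ≤ ∫ τ in m.x i..m.x (i + 1), u'' τ ^ 2 :=
    intervalIntegral.integral_nonneg hle fun _ _ => sq_nonneg _
  have hb : ∀ t ∈ Set.Ioo (m.x i) (m.x (i + 1)),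
      (u.sub (m.ofSlopes (m.mean u.dval))).dval t ^ 2
        ≤ m.h i * ∫ τ in m.x i..m.x (i + 1), u'' τ ^ 2 := by
    intro t ht
    change (u.dval t - m.piecewiseConst _ t) ^ 2 ≤ _
    rw [m.piecewiseConst_eq _ hi (Set.Ioo_subset_Ico_self ht), ← sq_abs]
    refine (pow_le_pow_left₀ (abs_nonneg _)
      (m.abs_sub_mean_le h h2 hi (Set.Ioo_subset_Icc_self ht)) 2).trans_eq ?_
    rw [mul_pow, Real.sq_sqrt hh.le, Real.sq_sqrt hI]
  calc _ ≤ ∫ _ in m.x i..m.x (i + 1), m.h i * ∫ τ in m.x i..m.x (i + 1), u'' τ ^ 2 :=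
        intervalIntegral.integral_mono_on_of_le_Ioo hle
          (intervalIntegrable_sub (H1.dval_sq_int _) (m.x_mem hi.le) (m.x_mem hi))
          intervalIntegrable_const hb
    _ = m.h i ^ 2 * ∫ τ in m.x i..m.x (i + 1), u'' τ ^ 2 := by
        rw [intervalIntegral.integral_const, smul_eq_mul, ← mul_assoc, sq]; rfl
    _ ≤ _ := by
        have := hH i hi
        gcongr

end Mesh

lemma Mesh.ofSlopes_isPL {N : ℕ} (m : Mesh N) (s : ℕ → ℝ) : m.IsPL (m.ofSlopes s) :=
  fun i hi => ⟨s i, fun _ ht => m.piecewiseConst_eq s hi (Set.Ioo_subset_Ico_self ht)⟩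

lemma Mesh.IsPL.sub {N : ℕ} {m : Mesh N} {v w : H1} (hv : m.IsPL v) (hw : m.IsPL w) :
    m.IsPL (v.sub w) := by
  intro i hi
  obtain ⟨s, hs⟩ := hv i hi
  obtain ⟨r, hr⟩ := hw i hi
  exact ⟨s - r, fun t ht => by simp only [H1.sub, hs t ht, hr t ht]⟩

/-- Quasi-optimality of the finite element solution in the `H¹` seminorm. -/
lemma Coeffs.quasi_optimal {P : Coeffs} {f : ℝ → ℝ} {u uh : H1} {N : ℕ} {m : Mesh N}
    (hu : P.IsWeakSolution f u) (huh : P.IsFESolution f m uh) {K : ℝ} (hK0 : 0 ≤ K)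
    (hK : ∀ e w : H1, e.val 0 = 0 → w.val 0 = 0 → P.B e w ≤ K * L2 e.dval * L2 w.dval)
    {v : H1} (hv0 : v.val 0 = 0) (hv1 : v.val 1 = 0) (hv : m.IsPL v) :
    P.a0 * L2 (u.sub uh).dval ≤ K * L2 (u.sub v).dval := by
  have he0 : (u.sub uh).val 0 = 0 := by simp [H1.sub, hu.1, huh.1]
  have he1 : (u.sub uh).val 1 = 0 := by simp [H1.sub, hu.2.1, huh.2.1]
  have horth : P.B (u.sub uh) (v.sub uh) = 0 := by
    have z0 : (v.sub uh).val 0 = 0 := by simp [H1.sub, hv0, huh.1]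
    have z1 : (v.sub uh).val 1 = 0 := by simp [H1.sub, hv1, huh.2.1]
    rw [P.B_sub_left, hu.2.2 _ z0 z1, huh.2.2.2 _ z0 z1 (hv.sub huh.2.2.1), sub_self]
  have h1 := P.coercive _ he0 he1
  have h2 := hK (u.sub uh) (u.sub v) he0 (by simp [H1.sub, hu.1, hv0])
  have h3 : P.B (u.sub uh) (u.sub uh) = P.B (u.sub uh) (u.sub v) := by
    rw [P.B_sub_right] at horth
    rw [P.B_sub_right, P.B_sub_right]
    linarith
  rcases (L2_nonneg (u.sub uh).dval).eq_or_lt with h0 | hpos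
  · rw [← h0, mul_zero]
    exact mul_nonneg hK0 (L2_nonneg _)
  · refine le_of_mul_le_mul_right ?_ hpos
    nlinarith

/-- A pointwise bound for the derivative of the error inside an element. -/
lemma Mesh.abs_error_deriv_le {N : ℕ} (m : Mesh N) {u uh : H1} {u'' : ℝ → ℝ}
    (h : IsPrim u.dval u'') (h2 : MemLp u'' 2 (volume.restrict (Set.Ioc 0 1)))
    (huh : m.IsPL uh) {i : ℕ} (hi : i < N) {t : ℝ}
    (ht : t ∈ Set.Ioo (m.x i) (m.x (i + 1))) :
    |u.dval t - uh.dval t| ≤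
      L2 (u.sub uh).dval / Real.sqrt (m.h i) + Real.sqrt (m.h i) * L2 u'' := by
  have hh := m.h_pos hi
  have hx0 := m.x_mem hi.le
  have hx1 := m.x_mem (Nat.succ_le_of_lt hi)
  have hle := (m.x_mono i hi).le
  have hmono : ∀ g : ℝ → ℝ, IntervalIntegrable (fun τ => g τ ^ 2) volume 0 1 →
      Real.sqrt (∫ τ in m.x i..m.x (i + 1), g τ ^ 2) ≤ L2 g := fun g hg =>
    Real.sqrt_le_sqrt (intervalIntegral.integral_mono_interval hx0.1 hle hx1.2
      (ae_of_all _ fun _ => sq_nonneg _) hg)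
  set e := (u.sub uh).dval with he
  have hsq := (memLp_Ioc_iff zero_le_one h2.1).1 h2
  obtain ⟨s, hs⟩ := huh i hi
  have hpt : ∀ y ∈ Set.Ioo (m.x i) (m.x (i + 1)),
      |e t| ≤ |e y| + Real.sqrt (m.h i) * L2 u'' := by
    intro y hy
    have h3 := (h.abs_sub_le h2 hx0.1 hx1.2 (Set.Ioo_subset_Icc_self hy)
      (Set.Ioo_subset_Icc_self ht)).trans
      (mul_le_mul_of_nonneg_left (hmono u'' hsq) (Real.sqrt_nonneg _))
    have e1 : u.dval t - u.dval y = e t - e y := by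
      simp only [he, H1.sub, hs t ht, hs y hy]; ring
    rw [e1] at h3
    have h4 := abs_sub_abs_le_abs_sub (e t) (e y)
    change |e t - e y| ≤ Real.sqrt (m.h i) * _ at h3
    linarith
  have hei : IntervalIntegrable (fun y => |e y|) volume (m.x i) (m.x (i + 1)) :=
    intervalIntegrable_sub (u.sub uh).dval_int.abs hx0 hx1
  have hint := intervalIntegral.integral_mono_on_of_le_Ioo hle intervalIntegrable_const
    (hei.add intervalIntegrable_const) hpt
  rw [intervalIntegral.integral_add hei intervalIntegrable_const, intervalIntegral.integral_const,
    intervalIntegral.integral_const, smul_eq_mul, smul_eq_mul] at hint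
  have h5 := (integral_abs_le_sqrt hle ((u.sub uh).memLp_dval.mono_Ioc hx0.1 hx1.2)).trans
    (mul_le_mul_of_nonneg_left (hmono e (u.sub uh).dval_sq_int) (Real.sqrt_nonneg _))
  have h6 : m.h i * |e t| ≤
      Real.sqrt (m.h i) * L2 e + m.h i * (Real.sqrt (m.h i) * L2 u'') :=
    hint.trans (add_le_add_left h5 _)
  change |e t| ≤ _
  refine le_of_mul_le_mul_left (h6.trans_eq ?_) hh
  have hr := Real.sqrt_pos.2 hh
  rw [mul_add, add_left_inj, mul_div_assoc', eq_div_iff hr.ne', mul_right_comm,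
    Real.mul_self_sqrt hh.le]

lemma Linf_le_of_ae {g : ℝ → ℝ} {C : ℝ}
    (h : ∀ᵐ t ∂(volume.restrict (Set.Ioo (0:ℝ) 1)), |g t| ≤ C) : Linf g ≤ C := by
  have : (ae (volume.restrict (Set.Ioo (0:ℝ) 1))).NeBot := by
    rw [ae_neBot, Ne, Measure.restrict_eq_zero]
    simp
  exact Filter.limsup_le_of_le
    (Filter.isCoboundedUnder_le_of_le _ (x := 0) fun _ => abs_nonneg _) h

/-- L^∞ error bounds on meshes in S_N, with the constant independent
of ρ₀ (Lemma 5.2). -/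
theorem statement15 (P : Coeffs) :
    ∃ C : ℝ, 0 < C ∧
      ∀ f : ℝ → ℝ, MemL2 f →
      ∀ u : H1, P.IsWeakSolution f u → u.IsH2 →
      ∀ ρ0 : ℝ, 1 ≤ ρ0 →
      ∀ (N : ℕ), 0 < N →
      ∀ (m : Mesh N), m.InS ρ0 →
      ∀ uh : H1, P.IsFESolution f m uh →
        Linf (fun t => u.val t - uh.val t) ≤ C * L2 (P.res f u) / (N:ℝ) ∧
        Linf (fun t => u.dval t - uh.dval t)
          ≤ Real.sqrt (ρ0 + 1) * C * L2 (P.res f u) / Real.sqrt (N:ℝ) := by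
  obtain ⟨K, hK0, hK⟩ := P.exists_bounded
  have ha0 := P.a0_pos
  refine ⟨2 * K / P.a0 ^ 2 + 2 / P.a0, by positivity, ?_⟩
  rintro f hf u hu ⟨u'', hmeas, hint, hsq, hftc⟩ ρ0 hρ N hN m hm uh huh
  have hprim : IsPrim u.dval u'' := ⟨hint, hftc⟩
  have h2 : MemLp u'' 2 (volume.restrict (Set.Ioc 0 1)) :=
    (memLp_Ioc_iff zero_le_one hmeas.aestronglyMeasurable).2 hsq
  have hN' : (0:ℝ) < N := Nat.cast_pos.2 hN
  set R := L2 (P.res f u) with hR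
  have hR0 : 0 ≤ R := L2_nonneg _
  have hS : L2 u'' ≤ R / P.a0 := by
    rw [le_div_iff₀' ha0]
    exact hu.L2_le_res hf hprim h2
  have hD : L2 (u.sub uh).dval ≤ 2 * K / P.a0 ^ 2 * R / N := by
    have h3 := Coeffs.quasi_optimal hu huh hK0 hK (v := m.ofSlopes (m.mean u.dval))
      intervalIntegral.integral_same (m.ofSlopes_mean_one hu.1 hu.2.1) (m.ofSlopes_isPL _)
    have h4 := m.L2_sub_ofSlopes_le hprim h2 (H := 2 / N) (by positivity) fun i hi => (hm i hi).2
    refine le_of_mul_le_mul_left (h3.trans ?_) ha0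
    calc K * L2 (u.sub (m.ofSlopes (m.mean u.dval))).dval ≤ K * (2 / N * (R / P.a0)) := by
          gcongr
          exact h4.trans (by gcongr)
      _ = _ := by field_simp
  constructor
  · refine Linf_le_of_ae ?_
    filter_upwards [ae_restrict_mem measurableSet_Ioo] with t ht
    refine ((u.sub uh).abs_val_le (by simp [H1.sub, hu.1, huh.1])
      (Set.Ioo_subset_Icc_self ht)).trans (hD.trans ?_)
    gcongr
    have : 0 ≤ 2 / P.a0 := by positivity
    linarith
  · refine Linf_le_of_ae ?_
    filter_upwards [m.exists_mem_Ioo_ae] with t ⟨i, hi, ht⟩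
    refine (m.abs_error_deriv_le hprim h2 huh.2.2.1 hi ht).trans ?_
    have hh := m.h_pos hi
    obtain ⟨hlow, hup⟩ := hm i hi
    have hρ0 : 0 < ρ0 := by linarith
    have hsN := Real.sqrt_pos.2 hN'
    have i1 : 1 / Real.sqrt (m.h i) ≤ Real.sqrt (ρ0 + 1) * Real.sqrt N := by
      rw [← Real.sqrt_mul (by linarith), one_div, ← Real.sqrt_inv]
      refine Real.sqrt_le_sqrt ?_
      have : (m.h i)⁻¹ ≤ ρ0 * N := inv_le_of_inv_le₀ (by positivity) (by rwa [← one_div])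
      linarith
    have i2 : Real.sqrt (m.h i) ≤ Real.sqrt (ρ0 + 1) * 2 / Real.sqrt N := by
      rw [le_div_iff₀ hsN, ← Real.sqrt_mul hh.le]
      have : m.h i * N ≤ ρ0 + 1 := by
        rw [le_div_iff₀ hN'] at hup
        linarith
      exact (Real.sqrt_le_sqrt this).trans (by linarith [Real.sqrt_nonneg (ρ0 + 1)])
    calc L2 (u.sub uh).dval / Real.sqrt (m.h i) + Real.sqrt (m.h i) * L2 u''
        ≤ 2 * K / P.a0 ^ 2 * R / N * (Real.sqrt (ρ0 + 1) * Real.sqrt N)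
          + Real.sqrt (ρ0 + 1) * 2 / Real.sqrt N * (R / P.a0) := by
          rw [div_eq_mul_one_div (L2 _)]
          gcongr
          exact L2_nonneg _
      _ = _ := by
          nth_rw 1 [← Real.mul_self_sqrt hN'.le]
          field_simp

end EquidMesh
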